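/- arXiv:1210.7708 — 3 statements merged into one kernel-verified Lean document; each statement's English description precedes it below -/
import Mathlib

section
/- Let n ≥ 2 and 1 ≤ k ≤ n-1. Every real polynomial p of degree at most n with sup_{x∈[-1,1]}|p(x)| ≤ 1 and p^{(k+1)}(1) = 0 satisfies |p^{(k)}(1)| ≤ (1/(k+1))·T_n^{(k)}(1); equivalently μ_k^*(1) ≤ (1/(k+1))·T_n^{(k)}(1). -/
open Polynomial Set

/-- `k`-th derivative of the Chebyshev polynomial `T_m`, evaluated at `x`. -/
noncomputable def chebDeriv (m : ℤ) (k : ℕ) (x : ℝ) : ℝ :=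
  (derivative^[k] (Polynomial.Chebyshev.T ℝ m)).eval x

/-- `σ_n = 2^(n-1) n! = T_n^{(n)}(1)`. -/
noncomputable def sigmaN (n : ℕ) : ℝ := 2 ^ (n - 1) * (n.factorial : ℝ)

/-- `f` is `n` times differentiable on the set `s`. -/
def NTimesDiffOn (n : ℕ) (f : ℝ → ℝ) (s : Set ℝ) : Prop :=
  ∀ i < n, DifferentiableOn ℝ (iteratedDerivWithin i f s) s

/-- The class `W^n_∞(σ)` on `[-1,1]`. -/
def memW (n : ℕ) (σ : ℝ) (f : ℝ → ℝ) : Prop :=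
  NTimesDiffOn n f (Icc (-1:ℝ) 1) ∧
  (∀ x ∈ Icc (-1:ℝ) 1, |f x| ≤ 1) ∧
  (∀ x ∈ Icc (-1:ℝ) 1, |iteratedDerivWithin n f (Icc (-1:ℝ) 1) x| ≤ σ)

/-- `m_k(x,σ) = sup { |f^{(k)}(x)| : f ∈ W^n_∞(σ) }`. -/
noncomputable def mval (n k : ℕ) (x σ : ℝ) : ℝ :=
  sSup {y | ∃ f : ℝ → ℝ, memW n σ f ∧
    y = |iteratedDerivWithin k f (Icc (-1:ℝ) 1) x|}

/-- `m_k^*(x,σ) = sup { |f^{(k)}(x)| : f ∈ W^n_∞(σ), f^{(k+1)}(x) = 0 }`. -/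
noncomputable def mstar (n k : ℕ) (x σ : ℝ) : ℝ :=
  sSup {y | ∃ f : ℝ → ℝ, memW n σ f ∧
    iteratedDerivWithin (k+1) f (Icc (-1:ℝ) 1) x = 0 ∧
    y = |iteratedDerivWithin k f (Icc (-1:ℝ) 1) x|}

/-- `μ_k(x₀)`: best constant in the pointwise Markov inequality. -/
noncomputable def muk (n k : ℕ) (x : ℝ) : ℝ :=
  sSup {y | ∃ p : Polynomial ℝ, p.natDegree ≤ n ∧
    (∀ t ∈ Icc (-1:ℝ) 1, |p.eval t| ≤ 1) ∧
    y = |(derivative^[k] p).eval x|}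

/-- `μ_k^*(x₀)`: best constant in the pointwise Schur-type inequality. -/
noncomputable def mukStar (n k : ℕ) (x : ℝ) : ℝ :=
  sSup {y | ∃ p : Polynomial ℝ, p.natDegree ≤ n ∧
    (∀ t ∈ Icc (-1:ℝ) 1, |p.eval t| ≤ 1) ∧
    (derivative^[k+1] p).eval x = 0 ∧
    y = |(derivative^[k] p).eval x|}

open Polynomial.Chebyshev
/-- Nonnegative with PF2 property. -/
def PF (f : ℝ[X]) : Prop :=
  (∀ i, 0 ≤ f.coeff i) ∧ ∀ i j, i ≤ j → f.coeff i * f.coeff (j+1) ≤ f.coeff (i+1) * f.coeff j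

lemma PF_mul (f : ℝ[X]) (hf : PF f) (u : ℝ) (hu : 0 ≤ u) : PF ((X + C u) * f) := by
  obtain ⟨h0, h1⟩ := hf
  have e0 : ((X + C u) * f).coeff 0 = u * f.coeff 0 := by
    rw [add_mul]; simp
  have es : ∀ m, ((X + C u) * f).coeff (m+1) = f.coeff m + u * f.coeff (m+1) := by
    intro m
    rw [add_mul]; simp [coeff_C_mul, coeff_X_mul]
  refine ⟨?_, ?_⟩
  · intro i
    cases i with
    | zero => rw [e0]; exact mul_nonneg hu (h0 0)
    | succ m => rw [es]; exact add_nonneg (h0 _) (mul_nonneg hu (h0 _))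
  · intro i j hij
    rcases eq_or_lt_of_le hij with rfl | hlt
    · exact le_of_eq (mul_comm _ _)
    cases i with
    | zero =>
      obtain ⟨m, rfl⟩ : ∃ m, j = m + 1 := ⟨j-1, by omega⟩
      rw [e0, es, es, es]
      have a1 := h1 0 (m+1) (by omega)
      have a2 := h1 0 m (by omega)
      have b1 := mul_nonneg (h0 0) (h0 m)
      have b2 := mul_nonneg (mul_nonneg hu (h0 0)) (h0 (m+1))
      have b3 := mul_nonneg hu (sub_nonneg.2 a2)
      have b4 := mul_nonneg (mul_nonneg hu hu) (sub_nonneg.2 a1)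
      have b5 := mul_nonneg hu (mul_nonneg (h0 1) (h0 m))
      simp only [zero_add] at *
      nlinarith
    | succ i =>
      obtain ⟨m, rfl⟩ : ∃ m, j = m + 1 := ⟨j-1, by omega⟩
      rw [es, es, es, es]
      have a1 := h1 i m (by omega)
      have a2 := h1 (i+1) (m+1) (by omega)
      have a3 := h1 i (m+1) (by omega)
      have a4 := h1 (i+1) m (by omega)
      have b3 := mul_nonneg hu (sub_nonneg.2 a3)
      have b5 := mul_nonneg hu (sub_nonneg.2 a4)
      have b4 := mul_nonneg (mul_nonneg hu hu) (sub_nonneg.2 a2)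
      nlinarith

lemma PF_one : PF (1 : ℝ[X]) := by
  refine ⟨fun i => ?_, fun i j _ => ?_⟩
  · rw [coeff_one]; split_ifs <;> norm_num
  · simp [coeff_one]

lemma PF_taylor_nodal (s : Finset ℕ) (v : ℕ → ℝ) (hv : ∀ i ∈ s, v i ≤ 1) :
    PF (taylor 1 (Lagrange.nodal s v)) := by
  classical
  induction s using Finset.induction_on with
  | empty => simpa using PF_one
  | insert a s ha ih =>
    rw [Lagrange.nodal_insert_eq_nodal ha, taylor_mul]
    have : taylor 1 (X - C (v a)) = X + C (1 - v a) := by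
      simp only [map_sub, taylor_X, taylor_C]; ring
    rw [this]
    exact PF_mul _ (ih fun i hi => hv i (Finset.mem_insert_of_mem hi)) _
      (sub_nonneg.2 (hv a (Finset.mem_insert_self _ _)))

/-- The functional. -/
noncomputable def LL (k : ℕ) (w q : ℝ[X]) : ℝ :=
  (taylor 1 q).coeff k * (taylor 1 w).coeff (k+1) - (taylor 1 w).coeff k * (taylor 1 q).coeff (k+1)

lemma LL_add (k w p q) : LL k w (p + q) = LL k w p + LL k w q := by
  simp [LL]; ring

lemma LL_C_mul (k w c q) : LL k w (C c * q) = c * LL k w q := by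
  simp [LL]; ring

lemma LL_sum (k w) (s : Finset ℕ) (f : ℕ → ℝ[X]) : LL k w (∑ i ∈ s, f i) = ∑ i ∈ s, LL k w (f i) := by
  classical
  induction s using Finset.induction_on with
  | empty => simp [LL]
  | insert a s ha ih => rw [Finset.sum_insert ha, Finset.sum_insert ha, LL_add, ih]

lemma LL_erase_nonneg (k : ℕ) (hk : 1 ≤ k) (s : Finset ℕ) (v : ℕ → ℝ) (hv : ∀ i ∈ s, v i ≤ 1)
    (i : ℕ) (hi : i ∈ s) : 0 ≤ LL k (Lagrange.nodal s v) (Lagrange.nodal (s.erase i) v) := by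
  classical
  have h := PF_taylor_nodal (s.erase i) v (fun j hj => hv j (Finset.mem_of_mem_erase hj))
  rw [LL, Lagrange.nodal_eq_mul_nodal_erase hi, taylor_mul]
  have : taylor 1 (X - C (v i)) = X + C (1 - v i) := by
    simp only [map_sub, taylor_X, taylor_C]; ring
  rw [this]
  generalize taylor 1 (Lagrange.nodal (s.erase i) v) = f at *
  obtain ⟨m, rfl⟩ : ∃ m, k = m + 1 := ⟨k-1, by omega⟩
  have es : ∀ m, ((X + C (1 - v i)) * f).coeff (m+1) = f.coeff m + (1 - v i) * f.coeff (m+1) := by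
    intro m
    rw [add_mul, coeff_add, coeff_C_mul, coeff_X_mul]
  rw [es, es]
  have := h.2 m (m+1) (by omega)
  nlinarith

lemma vanish (N : ℕ) (f : ℝ[X]) (hf : f.natDegree ≤ N + 1)
    (h : ∀ i ≤ N, f.eval (node N i) = 0) :
    f = C (f.coeff (N+1)) * Lagrange.nodal (Finset.range (N+1)) (node N) := by
  have hd : (f - C (f.coeff (N+1)) * Lagrange.nodal (Finset.range (N+1)) (node N)).degree
      < (Finset.range (N+1)).card := by
    rw [Finset.card_range, degree_lt_iff_coeff_zero]
    intro m hm
    have hnd : (Lagrange.nodal (Finset.range (N+1)) (node N)).natDegree = N+1 := by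
      rw [Lagrange.natDegree_nodal, Finset.card_range]
    rcases eq_or_lt_of_le hm with rfl | hlt
    · have : (Lagrange.nodal (Finset.range (N+1)) (node N)).coeff (N+1) = 1 := by
        have := Lagrange.nodal_monic (s := Finset.range (N+1)) (v := node N)
        rwa [Monic, leadingCoeff, hnd] at this
      rw [coeff_sub, coeff_C_mul, this]; ring
    · rw [coeff_sub, coeff_C_mul, coeff_eq_zero_of_natDegree_lt (by omega : f.natDegree < m),
        coeff_eq_zero_of_natDegree_lt (p := Lagrange.nodal _ _) (by omega)]; ring
  have := Polynomial.eq_zero_of_degree_lt_of_eval_index_eq_zero (v := node N) 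
    (s := Finset.range (N+1)) (strictAntiOn_node N).injOn hd ?_
  · exact sub_eq_zero.1 this
  · intro i hi
    rw [eval_sub, h i (by simpa [Nat.lt_succ_iff] using hi), eval_mul, Lagrange.eval_nodal_at_node hi]
    simp

lemma LL_le (N k : ℕ) (hk : 1 ≤ k) (p : ℝ[X]) (hp : p.natDegree ≤ N + 1)
    (hb : ∀ x ∈ Icc (-1:ℝ) 1, |p.eval x| ≤ 1) :
    LL k (Lagrange.nodal (Finset.range (N+1)) (node N)) p ≤
    LL k (Lagrange.nodal (Finset.range (N+1)) (node N)) (T ℝ N) := by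
  set w := Lagrange.nodal (Finset.range (N+1)) (node N) with hw
  have hinj := (strictAntiOn_node N).injOn
  have hww : LL k w w = 0 := by rw [LL]; ring
  set c : ℕ → ℝ := fun i => LL k w (Lagrange.basis (Finset.range (N+1)) (node N) i) with hc
  have key : ∀ q : ℝ[X], q.natDegree ≤ N + 1 → LL k w q = sumNodes N c q := by
    intro q hq
    set I := Lagrange.interpolate (Finset.range (N+1)) (node N) (fun i => q.eval (node N i)) with hI
    have hId : I.natDegree ≤ N + 1 := by
      have := Lagrange.degree_interpolate_lt (fun i => q.eval (node N i)) hinj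
      rw [Finset.card_range] at this
      exact natDegree_le_of_degree_le this.le
    have hv := vanish N (q - I) ((natDegree_sub_le _ _).trans (max_le hq hId)) (by
      intro i hi
      rw [eval_sub, hI, Lagrange.eval_interpolate_at_node _ hinj (by simpa [Nat.lt_succ_iff] using hi), sub_self])
    have : q = C ((q - I).coeff (N+1)) * w + I := by rw [← hv]; ring
    rw [this, LL_add, LL_C_mul, hww, mul_zero, zero_add, ← this, hI, Lagrange.interpolate_apply, LL_sum, sumNodes,
      ← Nat.range_succ_eq_Iic]
    exact Finset.sum_congr rfl fun i _ => by rw [LL_C_mul]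
  rw [key p hp, key (T ℝ N) (by simp [natDegree_T])]
  refine sumNodes_le_sumNodes_T ?_ hb
  intro i hi
  have hi' : i ∈ Finset.range (N+1) := by simpa [Nat.lt_succ_iff] using hi
  have hbas : Lagrange.basis (Finset.range (N+1)) (node N) i =
      C ((∏ j ∈ (Finset.range (N + 1)).erase i, (node N i - node N j))⁻¹) *
        Lagrange.nodal ((Finset.range (N+1)).erase i) (node N) := by
    rw [Lagrange.basis, Lagrange.nodal, ← Finset.prod_inv_distrib, map_prod, ← Finset.prod_mul_distrib]
    rfl
  have h1 := inv_pos_of_pos (zero_lt_prod_node_sub_node hi)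
  rw [mul_inv, ← inv_pow, inv_neg_one] at h1
  rw [hc]
  simp only [hbas, LL_C_mul]
  rw [← mul_assoc]
  exact mul_nonneg h1.le (LL_erase_nonneg k hk _ _ (fun j _ => node_mem_Icc.2) i hi')

lemma tcoeff (f : ℝ[X]) (m : ℕ) :
    (derivative^[m] f).eval 1 = m.factorial * (taylor 1 f).coeff m := by
  rw [taylor_coeff, ← factorial_smul_hasseDeriv]
  simp

lemma Om_coeff (f : ℝ[X]) (m : ℕ) :
    (taylor 1 ((X^2 - 1) * derivative f)).coeff (m+1) =
      2 * (m+1) * (taylor 1 f).coeff (m+1) + m * (taylor 1 f).coeff m := by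
  have h1 : taylor 1 (X^2 - 1 : ℝ[X]) = X * (X + C 2) := by
    simp only [map_sub, taylor_pow, taylor_X, taylor_one]
    have : (C 2 : ℝ[X]) = 2 := rfl
    rw [this]; simp only [map_one]; ring
  have h2 : ∀ j, (taylor 1 (derivative f)).coeff j = (j+1) * (taylor 1 f).coeff (j+1) := by
    intro j
    have h := tcoeff (derivative f) j
    rw [← Function.iterate_succ_apply, tcoeff, Nat.factorial_succ] at h
    have : (j.factorial : ℝ) ≠ 0 := by positivity
    push_cast at h
    apply mul_left_cancel₀ this
    linarith
  rw [taylor_mul, h1, mul_assoc, coeff_X_mul, add_mul, coeff_add, coeff_C_mul, h2]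
  cases m with
  | zero => simp [h2]
  | succ m => rw [coeff_X_mul, h2]; push_cast; ring

lemma Om_eq (N : ℕ) (hN : 1 ≤ N) : ∃ c : ℝ, 0 < c ∧ (X^2 - 1) * derivative (T ℝ N) =
    C c * Lagrange.nodal (Finset.range (N+1)) (node N) := by
  have hv := vanish N ((X^2 - 1) * derivative (T ℝ N)) ?_ ?_
  · refine ⟨_, ?_, hv⟩
    set c := ((X^2 - 1) * derivative (T ℝ N)).coeff (N+1)
    have h := congrArg (fun f => (taylor 1 f).coeff 1) hv
    have h3 := Om_coeff (T ℝ N) 0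
    rw [zero_add] at h3
    rw [h3, taylor_mul, taylor_C, coeff_C_mul] at h
    have h4 := (PF_taylor_nodal (Finset.range (N+1)) (node N) (fun j _ => node_mem_Icc.2)).1 1
    have h5 := tcoeff (T ℝ N) 1
    rw [Function.iterate_one, derivative_T_eval_one] at h5
    have h6 : (0:ℝ) < N := by exact_mod_cast hN
    have h7 : 0 < (taylor 1 (T ℝ N)).coeff 1 := by
      simp at h5
      simp
      rw [← h5]; positivity
    by_contra hcon
    push Not at hcon
    have := mul_nonneg (neg_nonneg.2 hcon) h4
    norm_num at h
    norm_num at *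
    linarith
  · refine natDegree_mul_le.trans ?_
    have h1 : (X^2 - 1 : ℝ[X]).natDegree ≤ 2 := by compute_degree
    have h2 := natDegree_derivative_le (T ℝ N)
    have h3 : (T ℝ N).natDegree = N := by simp [natDegree_T]
    rw [h3] at h2
    omega
  · intro i hi
    have hN' : (N:ℝ) ≠ 0 := by positivity
    rw [node, T_derivative_eq_U]
    have := U_real_cos (i * Real.pi / N) ((N:ℤ) - 1)
    have e : (((N:ℤ) - 1 : ℤ) + 1 : ℝ) * (i * Real.pi / N) = i * Real.pi := by
      push_cast; field_simp; ring
    rw [e, Real.sin_nat_mul_pi] at this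
    simp only [eval_mul, eval_sub, eval_pow, eval_X, eval_one]
    have h2 : Real.cos (i * Real.pi / N) ^ 2 - 1 = - Real.sin (i * Real.pi / N) ^ 2 := by
      have := Real.sin_sq_add_cos_sq (i * Real.pi / N); linarith
    rw [h2]
    linear_combination (-Real.sin (i * Real.pi / N) * eval (Real.cos (i * Real.pi / N)) ((N:ℤ) : ℝ[X])) * this

lemma tau_rec (N k : ℕ) : (2 * k + 1) * ((k + 1) * (taylor 1 (T ℝ N)).coeff (k+1)) =
    ((N:ℝ)^2 - k^2) * (taylor 1 (T ℝ N)).coeff k := by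
  have h := iterate_derivative_T_eval_one_recurrence (R := ℝ) N k
  rw [tcoeff, tcoeff, Nat.factorial_succ] at h
  have : (k.factorial : ℝ) ≠ 0 := by positivity
  push_cast at h
  apply mul_left_cancel₀ this
  linear_combination h

lemma tau_zero (N : ℕ) : (taylor 1 (T ℝ N)).coeff 0 = 1 := by
  simp

lemma tau_pos (N k : ℕ) (hk : k ≤ N) : 0 < (taylor 1 (T ℝ N)).coeff k := by
  induction k with
  | zero => rw [tau_zero]; norm_num
  | succ k ih =>
    have h := tau_rec N k
    have h1 := ih (by omega)
    have h2 : (k:ℝ) + 1 ≤ N := by exact_mod_cast hk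
    have h3 : 0 < (N:ℝ)^2 - k^2 := by nlinarith [(Nat.cast_nonneg k : (0:ℝ) ≤ k)]
    have h4 := mul_pos h3 h1
    rw [← h, ← mul_assoc] at h4
    exact pos_of_mul_pos_right h4 (by positivity)

lemma tau_ratio (N k : ℕ) (hk : k ≤ N) :
    ((N:ℝ) + 1 - k) * N * (taylor 1 (T ℝ (N+1 : ℕ))).coeff k =
      (N + 1) * (N + k) * (taylor 1 (T ℝ N)).coeff k := by
  induction k with
  | zero => rw [tau_zero, tau_zero]; push_cast; ring
  | succ k ih =>
    have h := tau_rec N k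
    have h' := tau_rec (N+1) k
    have h1 := ih (by omega)
    have h3 : ((2 * k + 1) * (k + 1) : ℝ) ≠ 0 := by positivity
    apply mul_left_cancel₀ h3
    push_cast at *
    linear_combination ((N:ℝ) - k) * N * h' + (N - k) * (N + 1 + k) * h1 - (N+1) * (N + k + 1) * h

lemma arith (m x a t b t' P N : ℝ) (hm : 0 ≤ m) (hx : 0 ≤ x) (hN : N = m + 1 + x) (ht : 0 < t)
    (h1 : (m+1) * (2*m+1) * t = (N^2 - m^2) * a)
    (h2 : (2*m+3) * ((m+2) * b) = (N^2 - (m+1)^2) * t)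
    (h3 : (N - m) * N * t' = (N+1) * (N+m+1) * t)
    (hP : P * (2*(m+2)*b + (m+1)*t) ≤ t * (2*(m+2)*b + (m+1)*t) - (2*(m+1)*t + m*a) * b) :
    P ≤ 1 / (m + 2) * t' := by
  have hNm : 0 < N - m := by linarith
  have hN0 : 0 < N := by linarith
  have hNp : 0 < N + m := by linarith
  have hNN : N^2 - m^2 ≠ 0 := by
    have : N^2 - m^2 = (N-m)*(N+m) := by ring
    rw [this]; positivity
  have ea : a = (m+1) * (2*m+1) * t / (N^2 - m^2) := by field_simp; linarith
  have eb : b = (N^2 - (m+1)^2) * t / ((2*m+3) * (m+2)) := by field_simp; linarith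
  have et : t' = (N+1) * (N+m+1) * t / ((N - m) * N) := by field_simp; linarith
  have hG : 0 < 2*N^2 + m + 1 := by positivity
  have eE : 2*(m+2)*b + (m+1)*t = t * (2*N^2+m+1) / (2*m+3) := by
    rw [eb]; field_simp; ring
  have eF : (2*(m+1)*t + m*a) * b = (t * (2*N^2+m+1) / (2*m+3)) *
      (t * ((m+1) * (2*N^2+m) * (N^2 - (m+1)^2) / ((m+2) * (N^2-m^2) * (2*N^2+m+1)))) := by
    rw [ea, eb]; field_simp; ring
  rw [eE, eF] at hP
  have hE : 0 < t * (2*N^2+m+1) / (2*m+3) := by positivity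
  have hP2 : P ≤ t * (1 - (m+1) * (2*N^2+m) * (N^2 - (m+1)^2) / ((m+2) * (N^2-m^2) * (2*N^2+m+1))) := by
    apply le_of_mul_le_mul_right _ hE
    linarith
  refine hP2.trans ?_
  have : 1 / (m+2) * t' = t * ((N+1) * (N+m+1) / ((m+2) * ((N - m) * N))) := by
    rw [et]; field_simp
  rw [this]
  apply mul_le_mul_of_nonneg_left _ ht.le
  rw [← sub_nonneg]
  have e : (N+1) * (N+m+1) / ((m+2) * ((N - m) * N)) -
      (1 - (m+1) * (2*N^2+m) * (N^2 - (m+1)^2) / ((m+2) * (N^2-m^2) * (2*N^2+m+1))) =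
      ((N+1)*(N+m+1)*(N+m)*(2*N^2+m+1) - N*((m+2)*(N^2-m^2)*(2*N^2+m+1)
        - (m+1)*(2*N^2+m)*(N^2-(m+1)^2))) / ((m+2)*((N-m)*(N+m))*(2*N^2+m+1)*N) := by
    have : N^2 - m^2 = (N-m)*(N+m) := by ring
    rw [this]
    field_simp
  rw [e]
  apply div_nonneg _ (by positivity)
  subst hN
  ring_nf
  positivity

lemma one_sided (n k : ℕ) (hn : 2 ≤ n) (hk1 : 1 ≤ k) (hk2 : k ≤ n - 1) (p : ℝ[X])
    (hp : p.natDegree ≤ n) (hb : ∀ x ∈ Icc (-1:ℝ) 1, |p.eval x| ≤ 1)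
    (h0 : (derivative^[k+1] p).eval 1 = 0) :
    (derivative^[k] p).eval 1 ≤ (1 / ((k:ℝ) + 1)) * chebDeriv n k 1 := by
  obtain ⟨N, rfl⟩ : ∃ N, n = N + 1 := ⟨n - 1, by omega⟩
  obtain ⟨m, rfl⟩ : ∃ m, k = m + 1 := ⟨k - 1, by omega⟩
  have hmN : m + 1 ≤ N := by omega
  obtain ⟨c, hc, hOm⟩ := Om_eq N (by omega)
  have hL := LL_le N (m+1) hk1 p hp hb
  set w := Lagrange.nodal (Finset.range (N+1)) (node N)
  have hp0 : (taylor 1 p).coeff (m+1+1) = 0 := by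
    rw [tcoeff] at h0
    exact (mul_eq_zero.1 h0).resolve_left (by positivity)
  have hw : ∀ j, c * (taylor 1 w).coeff (j+1) =
      2 * (j+1) * (taylor 1 (T ℝ N)).coeff (j+1) + j * (taylor 1 (T ℝ N)).coeff j := by
    intro j
    rw [← Om_coeff, hOm, taylor_mul, taylor_C, coeff_C_mul]
  have hw1 := hw m
  have hw2 := hw (m+1)
  have hL2 := mul_le_mul_of_nonneg_left hL hc.le
  rw [LL, LL, hp0] at hL2
  have r1 := tau_rec N m
  have r2 := tau_rec N (m+1)
  have r3 := tau_ratio N (m+1) hmN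
  have r4 := tau_pos N (m+1) hmN
  rw [chebDeriv, tcoeff, tcoeff]
  have hf : (0:ℝ) ≤ ((m+1).factorial : ℝ) := by positivity
  have hx : (m:ℝ) + 1 ≤ N := by exact_mod_cast hmN
  have := arith m (N - m - 1) ((taylor 1 (T ℝ N)).coeff m) ((taylor 1 (T ℝ N)).coeff (m+1))
    ((taylor 1 (T ℝ N)).coeff (m+1+1)) ((taylor 1 (T ℝ (N+1 : ℕ))).coeff (m+1))
    ((taylor 1 p).coeff (m+1)) N (by positivity) (by linarith) (by ring) r4
    (by linear_combination r1) (by push_cast at r2; linear_combination r2)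
    (by push_cast at r3; push_cast; linear_combination r3)
    (by
      push_cast at hw2
      rw [mul_sub, mul_sub] at hL2
      have e1 : c * ((taylor 1 p).coeff (m+1) * (taylor 1 w).coeff (m+1+1)) =
        (taylor 1 p).coeff (m+1) * (c * (taylor 1 w).coeff (m+1+1)) := by ring
      have e2 : c * ((taylor 1 (T ℝ N)).coeff (m+1) * (taylor 1 w).coeff (m+1+1)) =
        (taylor 1 (T ℝ N)).coeff (m+1) * (c * (taylor 1 w).coeff (m+1+1)) := by ring
      have e3 : c * ((taylor 1 w).coeff (m+1) * (taylor 1 (T ℝ N)).coeff (m+1+1)) =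
        (c * (taylor 1 w).coeff (m+1)) * (taylor 1 (T ℝ N)).coeff (m+1+1) := by ring
      rw [e1, e2, e3, hw1, hw2] at hL2
      linarith)
  have h5 := mul_le_mul_of_nonneg_left this hf
  push_cast at *
  rw [show (m:ℝ) + 1 + 1 = m + 2 by ring]
  linarith

/-- generalized Schur inequality `μ_k^*(1) ≤ (1/(k+1))·T_n^{(k)}(1)`. -/
theorem schur_inequality_generalized (n k : ℕ) (hn : 2 ≤ n) (hk1 : 1 ≤ k) (hk2 : k ≤ n - 1) :
    (∀ p : Polynomial ℝ, p.natDegree ≤ n → (∀ x ∈ Icc (-1:ℝ) 1, |p.eval x| ≤ 1) →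
      (derivative^[k+1] p).eval 1 = 0 →
      |(derivative^[k] p).eval 1| ≤ (1 / ((k:ℝ) + 1)) * chebDeriv n k 1) ∧
    mukStar n k 1 ≤ (1 / ((k:ℝ) + 1)) * chebDeriv n k 1 := by
  have main : ∀ p : Polynomial ℝ, p.natDegree ≤ n → (∀ x ∈ Icc (-1:ℝ) 1, |p.eval x| ≤ 1) →
      (derivative^[k+1] p).eval 1 = 0 →
      |(derivative^[k] p).eval 1| ≤ (1 / ((k:ℝ) + 1)) * chebDeriv n k 1 := by
    intro p hp hb h0
    rw [abs_le']
    refine ⟨one_sided n k hn hk1 hk2 p hp hb h0, ?_⟩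
    have h := one_sided n k hn hk1 hk2 (-p) (by rwa [natDegree_neg])
      (fun x hx => by rw [eval_neg, abs_neg]; exact hb x hx)
      (by rw [iterate_derivative_neg, eval_neg, h0, neg_zero])
    rwa [iterate_derivative_neg, eval_neg] at h
  refine ⟨main, ?_⟩
  apply csSup_le
  · exact ⟨_, 0, by simp, by simp, by simp, rfl⟩
  · rintro y ⟨p, hp, hb, h0, rfl⟩
    exact main p hp hb h0
end

section
/- Let n ≥ 2 and 1 ≤ k ≤ n-1. Every real polynomial p of degree at most n with sup_{x∈[-1,1]}|p(x)| ≤ 1 and p^{(k+1)}(1) = 0 satisfies both |p^{(k)}(1)| ≤ T_{n-1}^{(k)}(1) and |p^{(k)}(1)| ≤ (1/(k+1))·((n−1)/(n−1+k))·T_n^{(k)}(1); equivalently μ_k^*(1) ≤ min{ T_{n-1}^{(k)}(1), (1/(k+1))·((n−1)/(n−1+k))·T_n^{(k)}(1) }. -/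
open Polynomial Set

namespace SchurAux

open Polynomial.Chebyshev

lemma splits_derivative {f : ℝ[X]} (hf : f.Splits) : (derivative f).Splits := by
  rw [splits_iff_card_roots] at hf ⊢
  have h1 := card_roots_le_derivative f
  have h2 := card_roots' (derivative f)
  have h3 := natDegree_derivative_le f
  rcases Nat.eq_zero_or_pos f.natDegree with h0 | h0
  · rw [eq_C_of_natDegree_eq_zero h0]; simp
  · omega

lemma splits_iterate {f : ℝ[X]} (hf : f.Splits) (k : ℕ) : (derivative^[k] f).Splits := by
  induction k with
  | zero => simpa using hf
  | succ k ih => rw [Function.iterate_succ_apply']; exact splits_derivative ih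

/-- Laguerre inequality. -/
lemma laguerre {f : ℝ[X]} (hf : f.Splits) (x : ℝ) :
    f.eval x * (derivative (derivative f)).eval x ≤ (derivative f).eval x ^ 2 := by
  obtain ⟨m, hm⟩ := splits_iff_exists_multiset.mp hf
  have key : ∀ m : Multiset ℝ, ∀ g : ℝ[X], g = (m.map (X - C ·)).prod →
      g.eval x * (derivative (derivative g)).eval x ≤ (derivative g).eval x ^ 2 := by
    intro m
    induction m using Multiset.induction with
    | empty => intro g hg; simp [hg]
    | cons a s ih =>
      intro g hg
      have h := ih _ rfl
      set q := (s.map (X - C ·)).prod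
      rw [Multiset.map_cons, Multiset.prod_cons] at hg
      subst hg
      simp [derivative_mul]
      nlinarith [mul_le_mul_of_nonneg_left h (sq_nonneg (x - a)), sq_nonneg (q.eval x)]
  have h := key m _ rfl
  rw [hm]
  set q := (m.map (X - C ·)).prod
  simp
  nlinarith [mul_le_mul_of_nonneg_left h (sq_nonneg f.leadingCoeff)]

lemma iter_X_sub_mul (f : ℝ[X]) (t : ℝ) (k : ℕ) :
    derivative^[k+1] ((X - C t) * f) = (X - C t) * derivative^[k+1] f
      + C ((k:ℝ)+1) * derivative^[k] f := by
  induction k with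
  | zero => simp [derivative_mul]; ring
  | succ k ih =>
    rw [Function.iterate_succ_apply', ih]
    simp only [derivative_add, derivative_mul, derivative_sub, derivative_X, derivative_C,
      ← Function.iterate_succ_apply' derivative, Nat.succ_eq_add_one]
    simp only [C_add, Nat.cast_add, Nat.cast_one, C_1]
    ring

/-- the functional -/
noncomputable def L (w : ℝ[X]) (k : ℕ) (p : ℝ[X]) : ℝ :=
  (derivative^[k+1] w).eval 1 * (derivative^[k] p).eval 1 -
    (derivative^[k] w).eval 1 * (derivative^[k+1] p).eval 1

lemma L_add (w : ℝ[X]) (k : ℕ) (p q : ℝ[X]) : L w k (p + q) = L w k p + L w k q := by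
  simp only [L, iterate_map_add, eval_add]; ring

lemma L_C_mul (w : ℝ[X]) (k : ℕ) (a : ℝ) (p : ℝ[X]) : L w k (C a * p) = a * L w k p := by
  simp only [L, iterate_derivative_C_mul, eval_mul, eval_C]; ring

lemma L_C_mul_left (w : ℝ[X]) (k : ℕ) (a : ℝ) (p : ℝ[X]) : L (C a * w) k p = a * L w k p := by
  simp only [L, iterate_derivative_C_mul, eval_mul, eval_C]; ring

lemma L_self (w : ℝ[X]) (k : ℕ) : L w k w = 0 := by
  simp only [L]; ring

lemma L_sum (w : ℝ[X]) (k : ℕ) {ι : Type*} (s : Finset ι) (f : ι → ℝ[X]) :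
    L w k (∑ i ∈ s, f i) = ∑ i ∈ s, L w k (f i) := by
  simp only [L, iterate_derivative_sum, eval_finsetSum, Finset.mul_sum, Finset.sum_sub_distrib]

lemma L_factor_nonneg {f : ℝ[X]} (hf : f.Splits) (t : ℝ) (j : ℕ) :
    0 ≤ L ((X - C t) * f) (j+1) f := by
  have h := laguerre (splits_iterate hf j) 1
  simp only [← Function.iterate_succ_apply' derivative, Nat.succ_eq_add_one] at h
  simp only [L, iter_X_sub_mul]
  simp only [eval_add, eval_mul, eval_sub, eval_X, eval_C]
  push_cast
  have hj : (0:ℝ) ≤ j := Nat.cast_nonneg j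
  nlinarith [mul_le_mul_of_nonneg_left h (by positivity : (0:ℝ) ≤ j + 1),
    sq_nonneg (eval 1 (derivative^[j+1] f))]

/-- main inequality with nodal polynomial -/
lemma main_nodal (m j : ℕ) (p : ℝ[X]) (hp : p.natDegree ≤ m + 1)
    (hb : ∀ x ∈ Icc (-1:ℝ) 1, |p.eval x| ≤ 1) :
    L (Lagrange.nodal (Finset.range (m+1)) (node m)) (j+1) p ≤
    L (Lagrange.nodal (Finset.range (m+1)) (node m)) (j+1) (T ℝ m) := by
  set s := Finset.range (m+1) with hs
  set w := Lagrange.nodal s (node m) with hw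
  have hinj : Set.InjOn (node m) s := (strictAntiOn_node m).injOn
  set c : ℕ → ℝ := fun i => L w (j+1) (Lagrange.basis s (node m) i) with hc
  have hsum : ∀ q : ℝ[X], q.natDegree ≤ m + 1 → L w (j+1) q = sumNodes m c q := by
    intro q hq
    obtain ⟨a, ha⟩ : ∃ a : ℝ, (q - C a * w).degree < (s.card : ℕ) := by
      refine ⟨q.coeff (m+1), ?_⟩
      rw [hs, Finset.card_range, degree_lt_iff_coeff_zero]
      intro i hi
      have hwd : w.natDegree = m + 1 := by
        rw [hw, Lagrange.natDegree_nodal, hs, Finset.card_range]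
      have hwm : w.coeff (m+1) = 1 := by
        have : w.Monic := Lagrange.nodal_monic
        rw [← hwd]; exact this
      rcases hi.eq_or_lt with h | h
      · subst h; simp [hwm]
      · rw [coeff_sub, coeff_C_mul, coeff_eq_zero_of_natDegree_lt (by omega),
          coeff_eq_zero_of_natDegree_lt (p := w) (by omega)]; simp
    have h2 := Lagrange.eq_interpolate hinj ha
    have h3 : q = C a * w + ∑ i ∈ s, C (q.eval (node m i)) * Lagrange.basis s (node m) i := by
      rw [Lagrange.interpolate_apply] at h2
      rw [← sub_eq_iff_eq_add', h2]
      refine Finset.sum_congr rfl fun i hi => ?_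
      have : w.eval (node m i) = 0 := Lagrange.eval_nodal_at_node hi
      simp [this]
    conv_lhs => rw [h3]
    rw [L_add, L_C_mul, L_self, L_sum, sumNodes, mul_zero, zero_add, hs, Nat.range_succ_eq_Iic]
    refine Finset.sum_congr rfl fun i hi => ?_
    rw [L_C_mul, ← Nat.range_succ_eq_Iic]
  rw [hsum p hp, hsum (T ℝ m) (by rw [natDegree_T]; simp)]
  refine sumNodes_le_sumNodes_T ?_ hb
  intro i hi
  have his : i ∈ s := by rw [hs, Finset.mem_range]; omega
  have hsg := zero_lt_prod_node_sub_node hi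
  have hbasis : Lagrange.basis s (node m) i =
      C ((∏ k ∈ s.erase i, (node m i - node m k))⁻¹) * Lagrange.nodal (s.erase i) (node m) := by
    rw [Lagrange.basis, Lagrange.nodal_eq]
    simp only [Lagrange.basisDivisor]
    rw [Finset.prod_mul_distrib, ← Finset.prod_inv_distrib, map_prod]
  have hnod : w = (X - C (node m i)) * Lagrange.nodal (s.erase i) (node m) :=
    Lagrange.nodal_eq_mul_nodal_erase his
  have hspl : (Lagrange.nodal (s.erase i) (node m)).Splits := by
    rw [Lagrange.nodal_eq]
    exact Splits.prod fun k _ => Splits.X_sub_C _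
  have hpos := L_factor_nonneg hspl (node m i) j
  rw [← hnod] at hpos
  simp only [hc]
  rw [hbasis, L_C_mul, ← mul_assoc]
  refine mul_nonneg ?_ hpos
  have : (-1:ℝ)^i * (∏ k ∈ s.erase i, (node m i - node m k))⁻¹ =
      ((-1:ℝ)^i * (∏ k ∈ s.erase i, (node m i - node m k)))⁻¹ := by
    rw [mul_inv, ← inv_pow]; norm_num
  rw [this]
  exact (inv_pos.mpr hsg).le

noncomputable def Om (m : ℕ) : ℝ[X] := (X^2 - 1) * derivative (T ℝ m)

lemma Om_eq (m : ℕ) (hm : 1 ≤ m) : ∃ c : ℝ, 0 < c ∧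
    Om m = C c * Lagrange.nodal (Finset.range (m+1)) (node m) := by
  have hinj : Set.InjOn (node m) (Finset.range (m+1)) := (strictAntiOn_node m).injOn
  have hU : derivative (T ℝ m) = C (m:ℝ) * U ℝ ((m-1 : ℕ) : ℤ) := by
    rw [T_derivative_eq_U]; push_cast [hm]; simp
  have hm0 : (m:ℝ) ≠ 0 := by positivity
  have hmon : ((X:ℝ[X])^2 - 1).Monic := by
    have := monic_X_pow_sub_C (1:ℝ) (n := 2) (by norm_num)
    simpa using this
  have hmd : ((X:ℝ[X])^2 - 1).natDegree = 2 := by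
    have := natDegree_X_pow_sub_C (n := 2) (r := (1:ℝ))
    simpa using this
  have hlc : (Om m).leadingCoeff = m * 2 ^ (m-1) := by
    rw [Om, leadingCoeff_mul, hmon.leadingCoeff, hU, leadingCoeff_mul, leadingCoeff_C,
      leadingCoeff_U_natCast, one_mul]
  have hlp : 0 < (Om m).leadingCoeff := by rw [hlc]; positivity
  have hdeg : (Om m).natDegree = m + 1 := by
    have hne : derivative (T ℝ m) ≠ 0 := by
      intro h; rw [Om, h] at hlp; simp at hlp
    have h1 : (derivative (T ℝ m)).natDegree = m - 1 := by
      rw [natDegree_derivative, natDegree_T]; simp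
    rw [Om, natDegree_mul hmon.ne_zero hne, hmd, h1]; omega
  refine ⟨_, hlp, ?_⟩
  have hev : ∀ i ∈ Finset.range (m+1), (Om m).eval (node m i) = 0 := by
    intro i hi
    have hi' : i ≤ m := by rw [Finset.mem_range] at hi; omega
    have h := U_real_cos (i * Real.pi / m) ((m-1 : ℕ) : ℤ)
    have h2 : Real.sin ((((m-1:ℕ):ℤ) + 1 : ℝ) * (i * Real.pi / m)) = 0 := by
      have : ((((m-1:ℕ):ℤ) + 1 : ℝ) * (i * Real.pi / m)) = i * Real.pi := by
        push_cast [hm]; field_simp; ring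
      rw [this]; exact Real.sin_nat_mul_pi i
    rw [h2] at h
    have h3 : (node m i)^2 - 1 = - (Real.sin (i * Real.pi / m))^2 := by
      have := Real.sin_sq_add_cos_sq (i * Real.pi / m)
      rw [node]; linarith
    rw [Om, hU]
    simp only [eval_mul, eval_sub, eval_pow, eval_X, eval_one, eval_C]
    rw [h3]
    rw [show (U ℝ ((m-1 : ℕ) : ℤ)).eval (node m i)
      = (U ℝ ((m-1 : ℕ) : ℤ)).eval (Real.cos (i * Real.pi / m)) from rfl]
    linear_combination (-Real.sin (i * Real.pi / m) * m) * h
  rw [← sub_eq_zero]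
  apply Polynomial.eq_zero_of_degree_lt_of_eval_index_eq_zero _ hinj
  · rw [Finset.card_range, degree_lt_iff_coeff_zero]
    intro i hi
    have hwd : (Lagrange.nodal (Finset.range (m+1)) (node m)).natDegree = m + 1 := by
      rw [Lagrange.natDegree_nodal, Finset.card_range]
    have hwm : (Lagrange.nodal (Finset.range (m+1)) (node m)).coeff (m+1) = 1 := by
      have : (Lagrange.nodal (Finset.range (m+1)) (node m)).Monic := Lagrange.nodal_monic
      rw [← hwd]
      conv_rhs => rw [← this.leadingCoeff]
      rw [leadingCoeff, hwd]
    rcases hi.eq_or_lt with h | h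
    · subst h
      rw [coeff_sub, coeff_C_mul, hwm, leadingCoeff, hdeg]; ring
    · rw [coeff_sub, coeff_C_mul, coeff_eq_zero_of_natDegree_lt (by omega),
        coeff_eq_zero_of_natDegree_lt (by rw [hwd]; omega)]; simp
  · intro i hi
    have h2 := Lagrange.eval_nodal_at_node (v := node m) hi
    simp [h2, hev i hi]

lemma Om_deriv (m j : ℕ) : (derivative^[j+1] (Om m)).eval 1 =
    (derivative^[j+1] (T ℝ m)).eval 1 + (j + (m:ℝ)^2) * (derivative^[j] (T ℝ m)).eval 1 := by
  have h1 : derivative (Om m) = derivative (T ℝ m) * X + C ((m:ℝ)^2) * T ℝ m := by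
    have := one_sub_X_sq_mul_derivative_derivative_T_eq_poly_in_T (R := ℝ) (m:ℤ)
    simp only [Function.iterate_succ_apply', Function.iterate_zero, id] at this
    rw [Om, derivative_mul]
    simp only [derivative_sub, derivative_X_pow, derivative_one]
    simp at this ⊢
    have h2 : Polynomial.C (2:ℝ) = 2 := rfl
    rw [h2]
    linear_combination (-1) * this
  rw [Function.iterate_succ_apply, h1, iterate_map_add, iterate_derivative_C_mul,
    iterate_derivative_derivative_mul_X]
  simp
  ring

lemma D_rec (m k : ℕ) : (2 * (k:ℝ) + 1) * chebDeriv m (k+1) 1 =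
    ((m:ℝ)^2 - k^2) * chebDeriv m k 1 := by
  have := iterate_derivative_T_eval_one_recurrence (R := ℝ) (m:ℤ) k
  simpa [chebDeriv] using this

lemma D_pos (m k : ℕ) (h : k ≤ m) : 0 < chebDeriv m k 1 := by
  induction k with
  | zero => simp [chebDeriv]
  | succ k ih =>
    have h1 := D_rec m k
    have h2 := ih (by omega)
    have h3 : (k:ℝ) + 1 ≤ m := by exact_mod_cast h
    have h4 : 0 < (m:ℝ)^2 - k^2 := by nlinarith [Nat.cast_nonneg (α := ℝ) k]
    have h5 := mul_pos h4 h2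
    rw [← h1] at h5
    exact pos_of_mul_pos_right h5 (by positivity)

lemma D_ratio (m k : ℕ) (h : k ≤ m) : ((m:ℝ) + 1 - k) * m * chebDeriv ((m+1 : ℕ):ℤ) k 1 =
    (m + 1) * (m + k) * chebDeriv m k 1 := by
  induction k with
  | zero => simp [chebDeriv]
  | succ k ih =>
    have h0 := ih (by omega)
    have h1 := D_rec m k
    have h2 := D_rec (m+1) k
    have h3 : (k:ℝ) + 1 ≤ m := by exact_mod_cast h
    have hk : (0:ℝ) ≤ k := Nat.cast_nonneg k
    have h4 : (0:ℝ) < (2 * k + 1) * (m + k) := by nlinarith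
    push_cast at h1 h2 ⊢
    set A := chebDeriv ((m:ℤ)+1) (k+1) 1
    set B := chebDeriv (m:ℤ) (k+1) 1
    set a := chebDeriv ((m:ℤ)+1) k 1
    set b := chebDeriv (m:ℤ) k 1
    apply mul_left_cancel₀ h4.ne'
    have e1 : (m:ℝ) + 1 - (k+1) = m - k := by ring
    rw [e1]
    push_cast at h0
    linear_combination (m + k) * (m-k) * m * h2 + (m-k)*(m+k)*(m+1+k) * h0
      - (m+k)*(m+1)*(m+(k+1)) * h1

lemma final_alg (m j : ℕ) (hj : j + 1 ≤ m) (y : ℝ)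
    (D0 D1 D2 : ℝ) (h0 : 0 < D1)
    (h1 : (2 * (j:ℝ) + 1) * D1 = ((m:ℝ)^2 - j^2) * D0)
    (h2 : (2 * (j:ℝ) + 3) * D2 = ((m:ℝ)^2 - (j+1)^2) * D1)
    (h : (D2 + (j + 1 + (m:ℝ)^2) * D1) * y ≤
      (D2 + (j + 1 + (m:ℝ)^2) * D1) * D1 - (D1 + (j + (m:ℝ)^2) * D0) * D2) :
    y * ((j + 2) * (m - j)) ≤ (m + 1) * D1 := by
  obtain ⟨r, rfl⟩ := Nat.exists_eq_add_of_le hj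
  push_cast at *
  have hjn : (0:ℝ) ≤ j := Nat.cast_nonneg j
  have hr : (0:ℝ) ≤ r := Nat.cast_nonneg r
  set M : ℝ := j + 1 + r with hM
  have hA : 0 < M^2 - (j:ℝ)^2 := by rw [hM]; nlinarith
  have hD0 : D0 = (2 * (j:ℝ) + 1) * D1 / (M^2 - j^2) := by
    rw [eq_div_iff hA.ne']; linarith
  have hD2 : D2 = (M^2 - (j+1)^2) * D1 / (2 * (j:ℝ) + 3) := by
    rw [eq_div_iff (by positivity)]; linarith
  -- W_{k+1} and W_k
  have hW2 : D2 + (j + 1 + M^2) * D1 = D1 * ((j+2) * (2 * M^2 + j + 1) / (2 * j + 3)) := by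
    rw [hD2]; field_simp; ring
  have hW1 : D1 + (j + M^2) * D0 = D1 * ((j+1) * (2 * M^2 + j) / (M^2 - j^2)) := by
    rw [hD0]; field_simp; ring
  rw [hW2, hW1] at h
  have hMj : 0 < M - j := by rw [hM]; linarith
  have hMj' : 0 < M + j := by rw [hM]; linarith
  have hA' : M^2 - (j:ℝ)^2 = (M-j)*(M+j) := by ring
  have hB : 0 < 2 * M^2 + j + 1 := by positivity
  have h' : y * (j+2) * (2 * M^2 + j + 1) * (M-j) * (M+j) ≤
      D1 * ((j+2) * (2 * M^2 + j + 1) * (M-j) * (M+j) -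
        (j+1) * (2 * M^2 + j) * (M^2 - (j+1)^2)) := by
    have hc : 0 < (2 * (j:ℝ) + 3) * (M-j) * (M+j) / D1 := by positivity
    have := mul_le_mul_of_nonneg_left h hc.le
    rw [hD2, hA'] at this
    have e1 : (2 * (j:ℝ) + 3) * (M-j) * (M+j) / D1 *
      (D1 * ((j+2) * (2 * M^2 + j + 1) / (2 * j + 3)) * y) =
      y * (j+2) * (2 * M^2 + j + 1) * (M-j) * (M+j) := by
      field_simp
    have e2 : (2 * (j:ℝ) + 3) * (M-j) * (M+j) / D1 *
      (D1 * ((j+2) * (2 * M^2 + j + 1) / (2 * j + 3)) * D1 -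
       D1 * ((j+1) * (2 * M^2 + j) / ((M-j)*(M+j))) * ((M^2 - (j+1)^2) * D1 / (2 * j + 3))) =
      D1 * ((j+2) * (2 * M^2 + j + 1) * (M-j) * (M+j) -
        (j+1) * (2 * M^2 + j) * (M^2 - (j+1)^2)) := by
      field_simp
    rw [e1, e2] at this
    exact this
  have hfin : (j+2) * (2 * M^2 + j + 1) * (M-j) * (M+j) -
        (j+1) * (2 * M^2 + j) * (M^2 - (j+1)^2) ≤ (M+1) * ((2 * M^2 + j + 1) * (M + j)) := by
    have hx : 0 ≤ (j+1) * (M - j - 1) * (2 * M^2 - M) := by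
      have : 0 ≤ M - j - 1 := by rw [hM]; linarith
      have : 0 ≤ 2 * M^2 - M := by nlinarith
      positivity
    nlinarith [hx]
  have hpos : 0 < (2 * M^2 + j + 1) * (M + j) := by positivity
  have := mul_le_mul_of_nonneg_left hfin h0.le
  refine le_of_mul_le_mul_right ?_ hpos
  nlinarith

lemma upper (m j : ℕ) (hj : j + 1 ≤ m) (p : ℝ[X]) (hp : p.natDegree ≤ m + 1)
    (hb : ∀ x ∈ Icc (-1:ℝ) 1, |p.eval x| ≤ 1) (h0 : (derivative^[j+2] p).eval 1 = 0) :
    (derivative^[j+1] p).eval 1 * ((j + 2) * (m - j)) ≤ (m + 1) * chebDeriv m (j+1) 1 := by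
  obtain ⟨c, hc, hcO⟩ := Om_eq m (by omega)
  have h := main_nodal m j p hp hb
  have h' := mul_le_mul_of_nonneg_left h hc.le
  rw [← L_C_mul_left, ← L_C_mul_left, ← hcO] at h'
  simp only [L, Om_deriv] at h'
  rw [show j + 1 + 1 = j + 2 from rfl, h0] at h'
  have e1 := D_rec m j
  have e2 := D_rec m (j+1)
  refine final_alg m j hj _ _ _ (chebDeriv m (j+2) 1) (D_pos m (j+1) hj) e1 ?_ ?_
  · push_cast at e2
    linarith
  · simp only [chebDeriv]
    push_cast at h'
    linarith

lemma upper_abs (n k : ℕ) (hn : 2 ≤ n) (hk1 : 1 ≤ k) (hk2 : k ≤ n - 1) (p : ℝ[X])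
    (hp : p.natDegree ≤ n) (hb : ∀ x ∈ Icc (-1:ℝ) 1, |p.eval x| ≤ 1)
    (h0 : (derivative^[k+1] p).eval 1 = 0) :
      |(derivative^[k] p).eval 1| ≤ chebDeriv ((n:ℤ) - 1) k 1 ∧
      |(derivative^[k] p).eval 1| ≤
        (1 / ((k:ℝ) + 1)) * (((n:ℝ) - 1) / ((n:ℝ) - 1 + (k:ℝ))) * chebDeriv n k 1 := by
  obtain ⟨m, rfl⟩ : ∃ m, n = m + 1 := ⟨n - 1, by omega⟩
  obtain ⟨j, rfl⟩ : ∃ j, k = j + 1 := ⟨k - 1, by omega⟩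
  have hj : j + 1 ≤ m := by omega
  have u1 := upper m j hj p hp hb h0
  have u2 := upper m j hj (-p) (by simpa using hp) (by simpa using hb)
    (by simpa [iterate_derivative_neg] using h0)
  rw [iterate_derivative_neg, eval_neg] at u2
  have hjm : (j:ℝ) + 1 ≤ m := by exact_mod_cast hj
  have hj0 : (0:ℝ) ≤ j := Nat.cast_nonneg j
  have hq : (0:ℝ) < (j + 2) * (m - j) := by
    apply mul_pos <;> linarith
  set y := (derivative^[j+1] p).eval 1
  have hy : |y| * ((j + 2) * (m - j)) ≤ (m + 1) * chebDeriv m (j+1) 1 := by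
    rcases abs_cases y with ⟨h, _⟩ | ⟨h, _⟩ <;> rw [h] <;> assumption
  have hD := D_pos m (j+1) hj
  have hR := D_ratio m (j+1) hj
  have hcast : (((m+1:ℕ):ℤ) - 1) = (m:ℤ) := by push_cast; ring
  rw [hcast]
  constructor
  · refine le_of_mul_le_mul_right (hy.trans ?_) hq
    rw [mul_comm (chebDeriv _ _ _)]
    refine mul_le_mul_of_nonneg_right ?_ hD.le
    nlinarith
  · push_cast at hR ⊢
    have hm0 : (0:ℝ) < m := by linarith
    have hmj : (0:ℝ) < m - j := by linarith
    have hT : chebDeriv ((m:ℤ)+1) (j+1) 1 =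
        (m + 1) * (m + (j+1)) * chebDeriv m (j+1) 1 / ((m - j) * m) := by
      rw [eq_div_iff (by positivity)]; linear_combination hR
    rw [hT]
    have e : 1 / ((j:ℝ) + 1 + 1) * (((m:ℝ) + 1 - 1) / (m + 1 - 1 + (j + 1))) *
      ((m + 1) * (m + (j+1)) * chebDeriv m (j+1) 1 / ((m - j) * m)) =
      (m + 1) * chebDeriv m (j+1) 1 / ((j + 2) * (m - j)) := by
      have : (m:ℝ) + 1 - 1 = m := by ring
      rw [this]
      have : (j:ℝ) + 1 + 1 = j + 2 := by ring
      rw [this]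
      field_simp
    rw [e, le_div_iff₀ hq]
    exact hy

end SchurAux

/-- the improved endpoint bounds
`μ_k^*(1) ≤ min{ T_{n-1}^{(k)}(1), (1/(k+1))·((n-1)/(n-1+k))·T_n^{(k)}(1) }`. -/
theorem schur_inequality_improved (n k : ℕ) (hn : 2 ≤ n) (hk1 : 1 ≤ k) (hk2 : k ≤ n - 1) :
    (∀ p : Polynomial ℝ, p.natDegree ≤ n → (∀ x ∈ Icc (-1:ℝ) 1, |p.eval x| ≤ 1) →
      (derivative^[k+1] p).eval 1 = 0 →
      |(derivative^[k] p).eval 1| ≤ chebDeriv ((n:ℤ) - 1) k 1 ∧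
      |(derivative^[k] p).eval 1| ≤
        (1 / ((k:ℝ) + 1)) * (((n:ℝ) - 1) / ((n:ℝ) - 1 + (k:ℝ))) * chebDeriv n k 1) ∧
    mukStar n k 1 ≤ min (chebDeriv ((n:ℤ) - 1) k 1)
      ((1 / ((k:ℝ) + 1)) * (((n:ℝ) - 1) / ((n:ℝ) - 1 + (k:ℝ))) * chebDeriv n k 1) := by
  refine ⟨fun p hp hb h0 => SchurAux.upper_abs n k hn hk1 hk2 p hp hb h0, ?_⟩
  refine csSup_le ⟨0, 0, by simp, by simp, by simp, by simp⟩ ?_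
  rintro y ⟨p, hp, hb, h0, rfl⟩
  have h := SchurAux.upper_abs n k hn hk1 hk2 p hp hb h0
  exact le_min h.1 h.2
end

section
/- Let n ≥ 3. (a) Every real polynomial p of degree at most n with sup_{x∈[-1,1]}|p(x)| ≤ 1 and p''(1) = 0 satisfies |p'(1)| ≤ (1/3)·T_n'(1). (b) Every real polynomial p of degree at most n with sup_{x∈[-1,1]}|p(x)| ≤ 1 and p'''(1) = 0 satisfies |p''(1)| ≤ (3/π²)·((π²−6)/(15−π²))·T_n''(1), and in particular |p''(1)| ≤ 0.23·T_n''(1). -/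
open Polynomial Set

/-- `x 0 > x 1 > ... > x (m-1)` are roots of `R`, all less than `w`. -/
def DecRoots (R : ℝ[X]) (m : ℕ) (w : ℝ) (x : ℕ → ℝ) : Prop :=
  (∀ i, i + 1 < m → x (i + 1) < x i) ∧ (∀ i, i < m → x i < w ∧ R.eval (x i) = 0)

lemma rolle_poly (R : ℝ[X]) (a b : ℝ) (hab : a < b) (ha : R.eval a = 0) (hb : R.eval b = 0) :
    ∃ c, a < c ∧ c < b ∧ (derivative R).eval c = 0 := by
  obtain ⟨c, hc, h⟩ := exists_deriv_eq_zero hab R.continuous.continuousOn (ha.trans hb.symm)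
  exact ⟨c, hc.1, hc.2, by rwa [Polynomial.deriv] at h⟩

lemma DecRoots.step {R : ℝ[X]} {m : ℕ} {w : ℝ} {x : ℕ → ℝ} (h : DecRoots R (m + 1) w x) :
    ∃ y, DecRoots (derivative R) m w y := by
  have H : ∀ i, ∃ y, i < m → x (i + 1) < y ∧ y < x i ∧ (derivative R).eval y = 0 := by
    intro i
    by_cases hi : i < m
    · obtain ⟨c, h1, h2, h3⟩ := rolle_poly R (x (i + 1)) (x i) (h.1 i (by omega))
        (h.2 _ (by omega)).2 (h.2 _ (by omega)).2
      exact ⟨c, fun _ => ⟨h1, h2, h3⟩⟩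
    · exact ⟨0, fun h' => absurd h' hi⟩
  choose y hy using H
  refine ⟨y, fun i hi => ?_, fun i hi => ⟨?_, (hy i hi).2.2⟩⟩
  · exact (hy (i + 1) hi).2.1.trans (hy i (by omega)).1
  · exact (hy i hi).2.1.trans (h.2 i (by omega)).1

lemma DecRoots.iter {w : ℝ} (k m : ℕ) : ∀ {R : ℝ[X]} {x : ℕ → ℝ}, DecRoots R (m + k) w x →
    ∃ y, DecRoots (derivative^[k] R) m w y := by
  induction k with
  | zero => intro R x h; exact ⟨x, h⟩
  | succ k ih =>
    intro R x h
    obtain ⟨y, hy⟩ := DecRoots.step (m := m + k) h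
    rw [Function.iterate_succ_apply]
    exact ih hy

lemma eq_zero_of_derivative_zero {R : ℝ[X]} {a : ℝ} (h : derivative R = 0) (ha : R.eval a = 0) :
    R = 0 := by
  rw [eq_C_of_derivative_eq_zero h] at ha ⊢
  simpa using ha

lemma DecRoots.eq_zero {w : ℝ} (k : ℕ) : ∀ {R : ℝ[X]} {x : ℕ → ℝ}, DecRoots R k w x →
    derivative^[k] R = 0 → R = 0 := by
  induction k with
  | zero => intro R x _ h; exact h
  | succ k ih =>
    intro R x h h0
    obtain ⟨y, hy⟩ := h.step
    exact eq_zero_of_derivative_zero (ih hy h0) (h.2 0 (by omega)).2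

lemma DecRoots.mono {R : ℝ[X]} {m m' : ℕ} {w : ℝ} {x : ℕ → ℝ} (h : DecRoots R m w x)
    (hm : m' ≤ m) : DecRoots R m' w x :=
  ⟨fun i hi => h.1 i (by omega), fun i hi => h.2 i (by omega)⟩

lemma DecRoots.lt {R : ℝ[X]} {m : ℕ} {w : ℝ} {x : ℕ → ℝ} (h : DecRoots R m w x) :
    ∀ i j, i < j → j < m → x j < x i := by
  intro i j hij
  induction j, hij using Nat.le_induction with
  | base => exact fun hj => h.1 i hj
  | succ j hij ih => exact fun hj => (h.1 j hj).trans (ih (by omega))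

lemma DecRoots.natDegree {R : ℝ[X]} {m : ℕ} {w : ℝ} {x : ℕ → ℝ} (h : DecRoots R m w x)
    (hR : R.natDegree < m) : R = 0 := by
  refine eq_zero_of_natDegree_lt_card_of_eval_eq_zero R (f := fun i : Fin m => x i) ?_
    (fun i => (h.2 i i.2).2) (by simpa using hR)
  intro i j hij
  rcases lt_trichotomy (i : ℕ) j with h1 | h1 | h1
  · exact absurd hij (h.lt _ _ h1 j.2).ne'
  · exact Fin.ext h1
  · exact absurd hij (h.lt _ _ h1 i.2).ne

/-- adding the root `w` in front -/
lemma DecRoots.cons {R : ℝ[X]} {m : ℕ} {w : ℝ} {x : ℕ → ℝ} (h : DecRoots R m w x)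
    (hw : R.eval w = 0) (w' : ℝ) (hw' : w < w') :
    ∃ y, y 0 = w ∧ DecRoots R (m + 1) w' y := by
  refine ⟨fun i => Nat.casesOn i w x, rfl, ?_, ?_⟩
  · rintro (_ | i) hi
    · exact (h.2 0 (by omega)).1
    · exact h.1 i (by omega)
  · rintro (_ | i) hi
    · exact ⟨hw', hw⟩
    · exact ⟨(h.2 i (by omega)).1.trans hw', (h.2 i (by omega)).2⟩

lemma DecRoots.step_cons {R : ℝ[X]} {m : ℕ} {w : ℝ} {x : ℕ → ℝ} (h : DecRoots R m w x)
    (hw : R.eval w = 0) : ∃ y, DecRoots (derivative R) m w y := by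
  obtain ⟨y, hy0, hy⟩ := h.cons hw (w + 1) (by linarith)
  have H : ∀ i, ∃ z, i < m → y (i + 1) < z ∧ z < y i ∧ (derivative R).eval z = 0 := by
    intro i
    by_cases hi : i < m
    · obtain ⟨c, h1, h2, h3⟩ := rolle_poly R (y (i + 1)) (y i) (hy.1 i (by omega))
        (hy.2 _ (by omega)).2 (hy.2 _ (by omega)).2
      exact ⟨c, fun _ => ⟨h1, h2, h3⟩⟩
    · exact ⟨0, fun h' => absurd h' hi⟩
  choose z hz using H
  have hyw : ∀ i, i < m → y i ≤ w := by
    intro i hi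
    rcases Nat.eq_zero_or_pos i with rfl | h0
    · exact hy0.le
    · rw [← hy0]; exact (hy.lt 0 i h0 (by omega)).le
  refine ⟨z, fun i hi => ?_, fun i hi => ⟨?_, (hz i hi).2.2⟩⟩
  · exact (hz (i + 1) hi).2.1.trans (hz i (by omega)).1
  · exact (hz i hi).2.1.trans_le (hyw i hi)

lemma vanish_s13 (n k : ℕ) (hk : k + 1 ≤ n) (R : ℝ[X]) (hR : R.natDegree ≤ n) (w : ℝ) (x : ℕ → ℝ)
    (h : DecRoots R (n - 1) w x) (h1 : (derivative^[k] R).eval w = 0)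
    (h2 : (derivative^[k + 1] R).eval w = 0) : R = 0 := by
  obtain ⟨y, hy⟩ := DecRoots.iter k (n - 1 - k) (R := R) (x := x) (w := w)
    (by rwa [Nat.sub_add_cancel (by omega)])
  obtain ⟨z, hz⟩ := hy.step_cons h1
  rw [Function.iterate_succ_apply'] at h2
  obtain ⟨u, -, hu⟩ := hz.cons h2 (w + 1) (by linarith)
  have hd : (derivative (derivative^[k] R)).natDegree < n - 1 - k + 1 := by
    rw [← Function.iterate_succ_apply' (f := (derivative : ℝ[X] → ℝ[X]))]
    have := natDegree_iterate_derivative R (k + 1)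
    simp only [Nat.succ_eq_add_one]
    omega
  have h0 := hu.natDegree hd
  exact DecRoots.eq_zero k (h.mono (by omega)) (eq_zero_of_derivative_zero h0 h1)

lemma compare (n k : ℕ) (hk : k + 1 ≤ n) (P p : ℝ[X]) (hP : P.natDegree ≤ n)
    (hp : p.natDegree ≤ n) (s : ℕ → ℝ) (hs : ∀ i, i + 1 < n → s (i + 1) < s i)
    (σ : ℝ) (hσ : |σ| = 1)
    (hPs : ∀ i < n, P.eval (s i) = σ * (-1) ^ i) (hps : ∀ i < n, |p.eval (s i)| ≤ 1)
    (hP1 : (derivative^[k + 1] P).eval (s 0) = 0) (hp1 : (derivative^[k + 1] p).eval (s 0) = 0) :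
    |(derivative^[k] p).eval (s 0)| ≤ |(derivative^[k] P).eval (s 0)| := by
  by_contra hcon
  push Not at hcon
  have hpos : 0 < |(derivative^[k] p).eval (s 0)| := (abs_nonneg _).trans_lt hcon
  have hne : (derivative^[k] p).eval (s 0) ≠ 0 := abs_pos.mp hpos
  set ρ := (derivative^[k] P).eval (s 0) / (derivative^[k] p).eval (s 0) with hρ
  have hρ1 : |ρ| < 1 := by rw [hρ, abs_div, div_lt_one hpos]; exact hcon
  set R : ℝ[X] := P - C ρ * p with hRdef
  have hRi : ∀ j, (derivative^[j] R).eval (s 0) =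
      (derivative^[j] P).eval (s 0) - ρ * (derivative^[j] p).eval (s 0) := by
    intro j
    rw [hRdef, iterate_derivative_sub, iterate_derivative_C_mul]
    simp
  have hσ2 : σ * σ = 1 := by rw [← abs_mul_abs_self, hσ]; norm_num
  have hsgn : ∀ i < n, 0 < σ * (-1) ^ i * R.eval (s i) := by
    intro i hi
    have e : σ * (-1) ^ i * R.eval (s i) = 1 - (σ * (-1) ^ i) * (ρ * p.eval (s i)) := by
      have : ((-1 : ℝ) ^ i) * (-1) ^ i = 1 := by rw [← mul_pow]; norm_num
      rw [hRdef, eval_sub, hPs i hi, eval_mul, eval_C]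
      linear_combination σ * σ * this + hσ2
    have : |(σ * (-1) ^ i) * (ρ * p.eval (s i))| < 1 := by
      rw [abs_mul, abs_mul, abs_mul, hσ]
      simp only [abs_pow, abs_neg, abs_one, one_pow, one_mul]
      nlinarith [hps i hi, abs_nonneg ρ, abs_nonneg (p.eval (s i))]
    rw [e]
    linarith [(abs_lt.mp this).2]
  have hdec : ∀ j, j < n → s j ≤ s 0 := by
    intro j
    induction j with
    | zero => intro _; exact le_rfl
    | succ j ih => intro hj; exact (hs j hj).le.trans (ih (by omega))
  have H : ∀ i, ∃ y, i + 1 < n → s (i + 1) < y ∧ y < s i ∧ R.eval y = 0 := by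
    intro i
    by_cases hi : i + 1 < n
    · have a1 := hsgn i (by omega)
      have a2 := hsgn (i + 1) hi
      have hlt := hs i hi
      have hc : ContinuousOn (fun t => σ * (-1) ^ i * R.eval t) (Icc (s (i + 1)) (s i)) := by
        fun_prop
      have := intermediate_value_Ioo hlt.le hc
      have hmem : (0 : ℝ) ∈ Ioo (σ * (-1) ^ i * R.eval (s (i + 1))) (σ * (-1) ^ i * R.eval (s i)) :=
        ⟨by rw [pow_succ] at a2; linarith, a1⟩
      obtain ⟨y, hy, hy0⟩ := this hmem
      refine ⟨y, fun _ => ⟨hy.1, hy.2, ?_⟩⟩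
      have hne' : σ * (-1) ^ i ≠ 0 := by
        intro h; rw [h, zero_mul] at a1; exact lt_irrefl _ a1
      exact (mul_eq_zero.mp hy0).resolve_left hne'
    · exact ⟨0, fun h => absurd h hi⟩
  choose y hy using H
  have hroots : DecRoots R (n - 1) (s 0) y := by
    refine ⟨fun i hi => ?_, fun i hi => ⟨?_, (hy i (by omega)).2.2⟩⟩
    · exact (hy (i + 1) (by omega)).2.1.trans (hy i (by omega)).1
    · exact (hy i (by omega)).2.1.trans_le (hdec i (by omega))
  have hR0 : R = 0 := by
    refine vanish_s13 n k hk R ?_ (s 0) y hroots ?_ ?_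
    · refine (natDegree_sub_le _ _).trans (max_le hP ((natDegree_C_mul_le _ _).trans hp))
    · rw [hRi, hρ]; field_simp; ring
    · rw [hRi, hP1, hp1]; ring
  have := hsgn 0 (by omega)
  rw [hR0] at this
  simp at this

lemma trig_upper (n : ℕ) (hn : 3 ≤ n) :
    (n : ℝ) ^ 2 * (1 - Real.cos (Real.pi / n)) + Real.pi ^ 2 / 16 * (1 - Real.cos (Real.pi / n))
      ≤ Real.pi ^ 2 / 2 := by
  have hn0 : (3 : ℝ) ≤ n := by exact_mod_cast hn
  have hpi := Real.pi_pos
  obtain ⟨z, hz⟩ : ∃ z, z = Real.pi / n / 4 := ⟨_, rfl⟩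
  have hz0 : 0 < z := by rw [hz]; positivity
  have hnz : (n : ℝ) * z = Real.pi / 4 := by rw [hz]; field_simp
  have hz1 : z ≤ Real.pi / 12 := by nlinarith
  have hcos : Real.cos (Real.pi / n) = 1 - 8 * Real.sin z ^ 2 * Real.cos z ^ 2 := by
    have : Real.pi / n = 2 * (2 * z) := by rw [hz]; ring
    rw [this, Real.cos_two_mul, Real.cos_two_mul]
    nlinarith [Real.sin_sq_add_cos_sq z]
  have hs : Real.sin z ≤ z := Real.sin_le hz0.le
  have hs0 : 0 ≤ Real.sin z := Real.sin_nonneg_of_nonneg_of_le_pi hz0.le (by linarith)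
  have hc0 : 0 ≤ Real.cos z := Real.cos_nonneg_of_neg_pi_div_two_le_of_le (by linarith) (by linarith)
  have hc := Real.cos_le_one_div_sqrt_sq_add_one (x := z) (by linarith) (by linarith)
  have hc2 : Real.cos z ^ 2 * (z ^ 2 + 1) ≤ 1 := by
    have h1 : Real.cos z ^ 2 ≤ (1 / √(z ^ 2 + 1)) ^ 2 := pow_le_pow_left₀ hc0 hc 2
    rw [div_pow, Real.sq_sqrt (by positivity), one_pow] at h1
    rwa [le_div_iff₀ (by positivity)] at h1
  have hs2 : Real.sin z ^ 2 ≤ z ^ 2 := pow_le_pow_left₀ hs0 hs 2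
  have key : 8 * Real.sin z ^ 2 * Real.cos z ^ 2 * (1 + z ^ 2) ≤ 8 * z ^ 2 := by
    have := mul_le_mul hs2 hc2 (by positivity) (by positivity)
    linarith
  have hk2 := mul_le_mul_of_nonneg_left key (sq_nonneg (n : ℝ))
  rw [hcos]
  have e : Real.pi = 4 * (n * z) := by linarith
  rw [e]
  nlinarith

lemma trig_lower (n : ℕ) (hn : 3 ≤ n) :
    4.4 ≤ (n : ℝ) ^ 2 * (1 - Real.cos (Real.pi / n)) := by
  have hn0 : (3 : ℝ) ≤ n := by exact_mod_cast hn
  have hpi := Real.pi_pos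
  have p1 := Real.pi_gt_d2
  have p2 := Real.pi_lt_d4
  obtain ⟨y, hy⟩ : ∃ y, y = Real.pi / n / 2 := ⟨_, rfl⟩
  have hy0 : 0 < y := by rw [hy]; positivity
  have hny : (n : ℝ) * y = Real.pi / 2 := by rw [hy]; field_simp
  have hy1 : y ≤ 0.5236 := by nlinarith
  have hcos : Real.cos (Real.pi / n) = 1 - 2 * Real.sin y ^ 2 := by
    have : Real.pi / n = 2 * y := by rw [hy]; ring
    rw [this, Real.cos_two_mul]
    nlinarith [Real.sin_sq_add_cos_sq y]
  have hs := Real.sin_ge_sub_cube hy0.le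
  have hy2 : y ^ 2 ≤ 0.2742 := by nlinarith
  have hs' : y * 0.9543 ≤ Real.sin y := by nlinarith
  have : (y * 0.9543) ^ 2 ≤ Real.sin y ^ 2 := pow_le_pow_left₀ (by positivity) hs' 2
  have h3 := mul_le_mul_of_nonneg_left this (sq_nonneg (n : ℝ))
  have h4 : (n : ℝ) ^ 2 * (y * 0.9543) ^ 2 = (Real.pi / 2) ^ 2 * 0.9543 ^ 2 := by
    rw [← hny]; ring
  rw [hcos]
  nlinarith

lemma cos_half (n : ℕ) (hn : 3 ≤ n) : 1 / 2 ≤ Real.cos (Real.pi / n) := by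
  have hn0 : (3 : ℝ) ≤ n := by exact_mod_cast hn
  have hpi := Real.pi_pos
  rw [← Real.cos_pi_div_three]
  apply Real.cos_le_cos_of_nonneg_of_le_pi (by positivity) (by linarith)
  gcongr

lemma num_poly (g h : ℝ) (h0 : 0 ≤ h) (h1 : h ≤ 1 / 2) (hl : 3.735 ≤ g + 1.61 * h)
    (hu : g + 1.61 * h ≤ 4.935) :
    (2 - h) ^ 2 * (g - 3) * ((g + 1.61 * h) * (15 - 2 * (g + 1.61 * h))) ≤
      4 * g * (15 - 15 * h + 3 * h ^ 2 - 2 * g + g * h) * ((g + 1.61 * h) - 3) := by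
  obtain ⟨u, hu'⟩ : ∃ u, g = 4.935 - u - 1.61 * h := ⟨4.935 - 1.61 * h - g, by ring⟩
  subst hu'
  have u0 : 0 ≤ u := by linarith
  have u1 : u ≤ 1.2 := by linarith
  have a0 : 0 ≤ 33.6039165 - 73.63413225 * h + 23.4382995 * h ^ 2 := by nlinarith
  have a1 : 80 ≤ 123.9651 - 84.19855 * h + 16.583 * h ^ 2 := by nlinarith
  have a2 : -40 ≤ -34.34 + 20.61 * h - 3.22 * h ^ 2 := by nlinarith
  have a3 : 0 ≤ 4 - 2 * h := by linarith
  have s1 : 0 ≤ (123.9651 - 84.19855 * h + 16.583 * h ^ 2) +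
      u * (-34.34 + 20.61 * h - 3.22 * h ^ 2) + u ^ 2 * (4 - 2 * h) := by
    have := mul_le_mul_of_nonneg_left a2 u0
    have := mul_nonneg (sq_nonneg u) a3
    linarith
  have s2 := mul_nonneg h0 (add_nonneg a0 (mul_nonneg u0 s1))
  rw [← sub_nonneg]
  refine s2.trans (le_of_eq ?_)
  ring

lemma num_div (g h G : ℝ) (h0 : 0 ≤ h) (h1 : h ≤ 1 / 2) (hl : 3.9 ≤ g)
    (hG : g + 1.61 * h ≤ G) (hu : G ≤ 4.935) :
    0 < 15 - 15 * h + 3 * h ^ 2 - 2 * g + g * h ∧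
    (2 - h) ^ 2 * (g - 3) / (4 * g * (15 - 15 * h + 3 * h ^ 2 - 2 * g + g * h)) ≤
      (G - 3) / (G * (15 - 2 * G)) := by
  have hD : 0 < 15 - 15 * h + 3 * h ^ 2 - 2 * g + g * h := by nlinarith
  refine ⟨hD, ?_⟩
  have hp := num_poly g h h0 h1 (by linarith) (by linarith)
  obtain ⟨K, hK⟩ : ∃ K, K = g + 1.61 * h := ⟨_, rfl⟩
  rw [← hK] at hp hG
  have hK1 : 3.9 ≤ K := by linarith
  have st1 : (2 - h) ^ 2 * (g - 3) / (4 * g * (15 - 15 * h + 3 * h ^ 2 - 2 * g + g * h)) ≤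
      (K - 3) / (K * (15 - 2 * K)) := by
    rw [div_le_div_iff₀ (mul_pos (by linarith) hD) (mul_pos (by linarith) (by linarith))]
    linarith
  refine st1.trans ?_
  rw [div_le_div_iff₀ (mul_pos (by linarith) (by linarith)) (mul_pos (by linarith) (by linarith))]
  have : 0 ≤ (G - K) * (45 - 6 * K - 6 * G + 2 * G * K) :=
    mul_nonneg (by linarith) (by nlinarith)
  nlinarith

lemma final_const : (3 / Real.pi ^ 2) * ((Real.pi ^ 2 - 6) / (15 - Real.pi ^ 2)) ≤ 0.23 := by
  have p1 := Real.pi_gt_d4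
  have p2 := Real.pi_lt_d4
  obtain ⟨t, ht⟩ : ∃ t, t = Real.pi ^ 2 := ⟨_, rfl⟩
  have t1 : 9.86 ≤ t := by rw [ht]; nlinarith
  have t2 : t ≤ 9.8697 := by rw [ht]; nlinarith
  rw [← ht, div_mul_div_comm, div_le_iff₀ (mul_pos (by linarith) (by linarith))]
  nlinarith

/-- the comparison polynomial: Chebyshev plus a multiple of (1+X) times its derivative -/
noncomputable def cmpPoly (n : ℕ) (b : ℝ) : ℝ[X] :=
  Chebyshev.T ℝ n + C b * ((1 + X) * derivative (Chebyshev.T ℝ n))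

lemma cmpPoly_natDegree (n : ℕ) (hn : 3 ≤ n) (b : ℝ) : (cmpPoly n b).natDegree ≤ n := by
  have hT : (Chebyshev.T ℝ n).natDegree = n := by simp [Chebyshev.natDegree_T]
  refine (natDegree_add_le _ _).trans (max_le hT.le ((natDegree_C_mul_le _ _).trans ?_))
  refine natDegree_mul_le.trans ?_
  have h1 : (1 + X : ℝ[X]).natDegree ≤ 1 := by
    refine (natDegree_add_le _ _).trans ?_
    simp
  have h2 := natDegree_derivative_le (Chebyshev.T ℝ n)
  omega

lemma deriv_T_node (n i : ℕ) (hi : i + 1 ≤ n) :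
    (1 + Chebyshev.node n (i + 1)) *
      (derivative (Chebyshev.T ℝ n)).eval (Chebyshev.node n (i + 1)) = 0 := by
  have hn : n ≠ 0 := by omega
  rcases eq_or_lt_of_le hi with h | h
  · rw [h, Chebyshev.node_eq_neg_one hn]; ring
  · have hn' : (0 : ℝ) < n := by positivity
    have hlt : ((i + 1 : ℕ) : ℝ) < n := by exact_mod_cast h
    have hpi := Real.pi_pos
    have hs : 0 < Real.sin ((i + 1 : ℕ) * Real.pi / n) := by
      apply Real.sin_pos_of_pos_of_lt_pi
      · positivity
      · rw [div_lt_iff₀ hn']; nlinarith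
    have hU := Chebyshev.U_real_cos ((i + 1 : ℕ) * Real.pi / n) ((n : ℤ) - 1)
    have he : ((((n : ℤ) - 1 : ℤ) : ℝ) + 1) * ((i + 1 : ℕ) * Real.pi / n) =
        (i + 1 : ℕ) * Real.pi := by
      push_cast; field_simp; ring
    rw [he, Real.sin_nat_mul_pi] at hU
    have hU0 := (mul_eq_zero.mp hU).resolve_right hs.ne'
    have : (derivative (Chebyshev.T ℝ n)).eval (Chebyshev.node n (i + 1)) = 0 := by
      rw [Chebyshev.T_derivative_eq_U, eval_mul, Chebyshev.node, hU0, mul_zero]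
    rw [this, mul_zero]

lemma cmpPoly_node (n i : ℕ) (hi : i < n) (b : ℝ) :
    (cmpPoly n b).eval (Chebyshev.node n (i + 1)) = (-1) * (-1) ^ i := by
  have h := deriv_T_node n i hi
  have h2 := Chebyshev.eval_T_real_node (n := n) (i := i + 1) (by simp; omega)
  simp only [cmpPoly, eval_add, eval_mul, eval_C, eval_one, eval_X, h, h2]
  ring

lemma T_at_node (n : ℕ) (hn : 3 ≤ n) (w : ℝ) (hw : w = Chebyshev.node n 1) (hw1 : 1 - w ^ 2 ≠ 0) :
    ((derivative^[1] (Chebyshev.T ℝ n)).eval w = 0) ∧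
    ((derivative^[2] (Chebyshev.T ℝ n)).eval w = n ^ 2 / (1 - w ^ 2)) ∧
    ((derivative^[3] (Chebyshev.T ℝ n)).eval w = 3 * w * n ^ 2 / (1 - w ^ 2) ^ 2) ∧
    ((derivative^[4] (Chebyshev.T ℝ n)).eval w =
      (15 * w ^ 2 - (n ^ 2 - 4) * (1 - w ^ 2)) * n ^ 2 / (1 - w ^ 2) ^ 3) := by
  have h0 : (Chebyshev.T ℝ n).eval w = -1 := by
    have := Chebyshev.eval_T_real_node (n := n) (i := 1) (by simp; omega)
    rw [hw, this]; norm_num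
  have hne : 1 + w ≠ 0 := by
    intro h; apply hw1; have : w = -1 := by linarith
    rw [this]; norm_num
  have h1 : (derivative^[1] (Chebyshev.T ℝ n)).eval w = 0 := by
    have := deriv_T_node n 0 (by omega)
    rw [zero_add, ← hw] at this
    exact (mul_eq_zero.mp this).resolve_left hne
  have e2 := Chebyshev.one_sub_X_sq_mul_iterate_derivative_T_eval (R := ℝ) (n : ℤ) 0 w
  have e3 := Chebyshev.one_sub_X_sq_mul_iterate_derivative_T_eval (R := ℝ) (n : ℤ) 1 w
  have e4 := Chebyshev.one_sub_X_sq_mul_iterate_derivative_T_eval (R := ℝ) (n : ℤ) 2 w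
  simp only [zero_add, Nat.reduceAdd, Int.cast_natCast] at e2 e3 e4
  rw [h1, Function.iterate_zero, id, h0] at e2
  rw [h1] at e3
  have h2 : (derivative^[2] (Chebyshev.T ℝ n)).eval w = n ^ 2 / (1 - w ^ 2) := by
    rw [eq_div_iff hw1]; push_cast at e2; linarith
  rw [h2] at e3 e4
  have h3 : (derivative^[3] (Chebyshev.T ℝ n)).eval w = 3 * w * n ^ 2 / (1 - w ^ 2) ^ 2 := by
    apply mul_left_cancel₀ hw1
    rw [e3]; push_cast; field_simp; ring
  rw [h3] at e4
  refine ⟨h1, h2, h3, ?_⟩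
  apply mul_left_cancel₀ hw1
  rw [e4]; push_cast; field_simp; ring

lemma cmpPoly_derivs (n : ℕ) (b w : ℝ) :
    (derivative^[1] (cmpPoly n b)).eval w = (derivative^[1] (Chebyshev.T ℝ n)).eval w
      + b * ((derivative^[1] (Chebyshev.T ℝ n)).eval w
        + (1 + w) * (derivative^[2] (Chebyshev.T ℝ n)).eval w) ∧
    (derivative^[2] (cmpPoly n b)).eval w = (derivative^[2] (Chebyshev.T ℝ n)).eval w
      + b * (2 * (derivative^[2] (Chebyshev.T ℝ n)).eval w
        + (1 + w) * (derivative^[3] (Chebyshev.T ℝ n)).eval w) ∧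
    (derivative^[3] (cmpPoly n b)).eval w = (derivative^[3] (Chebyshev.T ℝ n)).eval w
      + b * (3 * (derivative^[3] (Chebyshev.T ℝ n)).eval w
        + (1 + w) * (derivative^[4] (Chebyshev.T ℝ n)).eval w) := by
  generalize hT : Chebyshev.T ℝ (n : ℤ) = Q
  simp only [cmpPoly, hT, Function.iterate_succ, Function.iterate_zero, Function.comp, id,
    derivative_add, derivative_mul, derivative_C, derivative_one, derivative_X, eval_add, eval_mul,
    eval_C, eval_one, eval_X, zero_mul, zero_add, one_mul]
  refine ⟨?_, ?_, ?_⟩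
  · first | trivial | ring
  · first | trivial | ring
  · first | trivial | ring

lemma iter_comp (p : ℝ[X]) (a c : ℝ) (k : ℕ) (x : ℝ) :
    (derivative^[k] (p.comp (C a * X + C c))).eval x =
      a ^ k * (derivative^[k] p).eval (a * x + c) := by
  induction k generalizing p with
  | zero => simp
  | succ k ih =>
    rw [Function.iterate_succ_apply, Function.iterate_succ_apply, derivative_comp]
    have : derivative (C a * X + C c) = C a := by simp
    rw [this, iterate_derivative_C_mul, eval_mul, eval_C, ih]
    ring

lemma main_bound (n k : ℕ) (hn : 3 ≤ n) (hk : k + 1 ≤ n) (b w : ℝ) (hw : w = Chebyshev.node n 1)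
    (hw2 : -1 < w)
    (hb : (derivative^[k + 1] (cmpPoly n b)).eval w = 0)
    (p : ℝ[X]) (hp : p.natDegree ≤ n) (hp1 : ∀ x ∈ Icc (-1 : ℝ) 1, |p.eval x| ≤ 1)
    (hpk : (derivative^[k + 1] p).eval 1 = 0) :
    |(derivative^[k] p).eval 1| ≤ ((1 + w) / 2) ^ k * |(derivative^[k] (cmpPoly n b)).eval w| := by
  have hpos : 0 < 1 + w := by linarith
  obtain ⟨a, ha⟩ : ∃ a, a = 2 / (1 + w) := ⟨_, rfl⟩
  have ha0 : 0 < a := by rw [ha]; positivity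
  have haw : a * (1 + w) = 2 := by rw [ha]; field_simp
  have hend : a * w + (a - 1) = 1 := by linarith
  have key := compare n k hk (cmpPoly n b) (p.comp (C a * X + C (a - 1)))
    (cmpPoly_natDegree n hn b) ?_ (fun i => Chebyshev.node n (i + 1))
    (fun i hi => Chebyshev.node_lt (by omega) (by omega)) (-1) (by norm_num)
    (fun i hi => cmpPoly_node n i hi b) ?_ ?_ ?_
  · simp only [zero_add, ← hw] at key
    rw [iter_comp, hend, abs_mul, abs_of_pos (pow_pos ha0 k)] at key
    have e : ((1 + w) / 2) ^ k * a ^ k = 1 := by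
      rw [← mul_pow]; rw [show (1 + w) / 2 * a = 1 by linarith, one_pow]
    calc |(derivative^[k] p).eval 1|
        = ((1 + w) / 2) ^ k * (a ^ k * |(derivative^[k] p).eval 1|) := by
          rw [← mul_assoc, e, one_mul]
      _ ≤ _ := mul_le_mul_of_nonneg_left key (by positivity)
  · refine natDegree_comp_le.trans ?_
    have : (C a * X + C (a - 1)).natDegree ≤ 1 := natDegree_linear_le
    nlinarith
  · intro i hi
    rw [eval_comp]
    apply hp1
    simp only [eval_add, eval_mul, eval_C, eval_X]
    have m1 := (Chebyshev.node_mem_Icc (n := n) (i := i + 1)).1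
    have m2 : Chebyshev.node n (i + 1) ≤ w := by
      rw [hw]
      rcases Nat.eq_zero_or_pos i with rfl | h0
      · exact le_rfl
      · exact (Chebyshev.node_lt (by omega) (by omega)).le
    constructor <;> nlinarith
  · simpa only [zero_add, ← hw] using hb
  · simp only [zero_add, ← hw]
    rw [iter_comp, hend, hpk, mul_zero]

lemma chebDeriv_one (n : ℕ) : chebDeriv n 1 1 = n ^ 2 := by
  have := Chebyshev.iterate_derivative_T_eval_one_recurrence (R := ℝ) (n : ℤ) 0
  simp at this
  simpa [chebDeriv] using this

lemma chebDeriv_two (n : ℕ) : chebDeriv n 2 1 = n ^ 2 * (n ^ 2 - 1) / 3 := by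
  have := Chebyshev.iterate_derivative_T_eval_one_recurrence (R := ℝ) (n : ℤ) 1
  have h1 := chebDeriv_one n
  unfold chebDeriv at h1 ⊢
  rw [h1] at this
  push_cast at this
  norm_num at this
  simp only [Function.iterate_succ, Function.iterate_zero, Function.comp, id] 
  linarith

lemma part_one (n : ℕ) (hn : 3 ≤ n) (p : ℝ[X]) (hp : p.natDegree ≤ n)
    (hp1 : ∀ x ∈ Icc (-1 : ℝ) 1, |p.eval x| ≤ 1) (hpk : (derivative^[2] p).eval 1 = 0) :
    |(derivative^[1] p).eval 1| ≤ (1 / 3) * chebDeriv n 1 1 := by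
  obtain ⟨w, hw⟩ : ∃ w, w = Chebyshev.node n 1 := ⟨_, rfl⟩
  have hwc : w = Real.cos (Real.pi / n) := by rw [hw, Chebyshev.node]; simp
  have w1 : 1 / 2 ≤ w := by rw [hwc]; exact cos_half n hn
  have w2 : w < 1 := by
    have := Chebyshev.node_lt (n := n) (i := 0) (j := 1) (by omega) (by omega)
    rw [← hw] at this
    simpa [Chebyshev.node] using this
  have hne : 1 - w ^ 2 ≠ 0 := by nlinarith
  have hf : 1 - w ^ 2 = (1 - w) * (1 + w) := by ring
  have q1 : (1 - w) ≠ 0 := by linarith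
  have q2 : (1 + w) ≠ 0 := by linarith
  have q3 : (2 + w) ≠ 0 := by linarith
  obtain ⟨t1, t2, t3, t4⟩ := T_at_node n hn w hw hne
  obtain ⟨c1, c2, -⟩ := cmpPoly_derivs n (-(1 - w) / (2 + w)) w
  have hb := main_bound n 1 hn (by omega) (-(1 - w) / (2 + w)) w hw (by linarith)
    (by rw [c2, t2, t3, hf]; field_simp; ring) p hp hp1 hpk
  refine hb.trans ?_
  have e : (0 : ℝ) + -(1 - w) / (2 + w) * (0 + (1 + w) * (n ^ 2 / (1 - w ^ 2))) =
      -(n ^ 2 / (2 + w)) := by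
    rw [hf]; field_simp; ring
  rw [c1, t1, t2, e, abs_neg, abs_of_nonneg (div_nonneg (by positivity) (by linarith)),
    chebDeriv_one]
  rw [pow_one, ← mul_div_assoc, div_le_iff₀ (by linarith)]
  nlinarith [sq_nonneg (n : ℝ), mul_nonneg (sq_nonneg (n : ℝ)) (sub_nonneg.mpr w2.le)]

lemma part_two (n : ℕ) (hn : 3 ≤ n) (p : ℝ[X]) (hp : p.natDegree ≤ n)
    (hp1 : ∀ x ∈ Icc (-1 : ℝ) 1, |p.eval x| ≤ 1) (hpk : (derivative^[3] p).eval 1 = 0) :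
    |(derivative^[2] p).eval 1| ≤
      (3 / Real.pi ^ 2) * ((Real.pi ^ 2 - 6) / (15 - Real.pi ^ 2)) * chebDeriv n 2 1 := by
  have hn0 : (3 : ℝ) ≤ n := by exact_mod_cast hn
  obtain ⟨w, hw⟩ : ∃ w, w = Chebyshev.node n 1 := ⟨_, rfl⟩
  have hwc : w = Real.cos (Real.pi / n) := by rw [hw, Chebyshev.node]; simp
  have w1 : 1 / 2 ≤ w := by rw [hwc]; exact cos_half n hn
  have w2 : w < 1 := by
    have := Chebyshev.node_lt (n := n) (i := 0) (j := 1) (by omega) (by omega)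
    rw [← hw] at this
    simpa [Chebyshev.node] using this
  have u1 := trig_upper n hn
  have u2 := trig_lower n hn
  rw [← hwc] at u1 u2
  have p1 := Real.pi_gt_d4
  have p2 := Real.pi_lt_d4
  have hG1 : 9.8 ≤ Real.pi ^ 2 := by nlinarith
  have hG2 : Real.pi ^ 2 ≤ 9.87 := by nlinarith
  have hnum := num_div ((n ^ 2 - 1) * (1 - w)) (1 - w) (Real.pi ^ 2 / 2) (by linarith)
    (by linarith) (by linarith) (by nlinarith) (by linarith)
  obtain ⟨hD, hnum⟩ := hnum
  obtain ⟨D, hDd⟩ : ∃ D, D = 9 * w + 6 * w ^ 2 - (n ^ 2 - 4) * (1 - w ^ 2) := ⟨_, rfl⟩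
  have hDe : 15 - 15 * (1 - w) + 3 * (1 - w) ^ 2 - 2 * ((n ^ 2 - 1) * (1 - w)) +
      (n ^ 2 - 1) * (1 - w) * (1 - w) = D := by rw [hDd]; ring
  rw [hDe] at hD hnum
  have hne : 1 - w ^ 2 ≠ 0 := by nlinarith
  have hf : 1 - w ^ 2 = (1 - w) * (1 + w) := by ring
  have q1 : (1 - w) ≠ 0 := by linarith
  have q2 : (1 + w) ≠ 0 := by linarith
  have q3 : D ≠ 0 := hD.ne'
  obtain ⟨t1, t2, t3, t4⟩ := T_at_node n hn w hw hne
  obtain ⟨-, c2, c3⟩ := cmpPoly_derivs n (-(3 * w * (1 - w)) / D) w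
  have hb := main_bound n 2 hn (by omega) (-(3 * w * (1 - w)) / D) w hw (by linarith)
    (by rw [c3, t3, t4, hf]; field_simp; rw [hDd]; ring) p hp hp1 hpk
  refine hb.trans ?_
  have e : (n : ℝ) ^ 2 / (1 - w ^ 2) + -(3 * w * (1 - w)) / D *
      (2 * (n ^ 2 / (1 - w ^ 2)) + (1 + w) * (3 * w * n ^ 2 / (1 - w ^ 2) ^ 2)) =
      -(n ^ 2 * ((n ^ 2 - 1) * (1 - w) - 3) / ((1 - w) * D)) := by
    rw [hf]; field_simp; rw [hDd]; ring
  have hN : 0 ≤ ((n : ℝ) ^ 2 - 1) * (1 - w) - 3 := by linarith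
  rw [c2, t2, t3, e, abs_neg, abs_of_nonneg (div_nonneg (by positivity)
    (mul_nonneg (by linarith) hD.le)), chebDeriv_two]
  have hM : 0 < (n : ℝ) ^ 2 - 1 := by nlinarith
  have hfin := mul_le_mul_of_nonneg_left hnum (by positivity : 0 ≤ (n : ℝ) ^ 2 * (n ^ 2 - 1))
  have r1 : Real.pi ^ 2 ≠ 0 := by positivity
  have r2 : 15 - Real.pi ^ 2 ≠ 0 := by linarith
  have r3 : 15 - 2 * (Real.pi ^ 2 / 2) = 15 - Real.pi ^ 2 := by ring
  have hM' := hM.ne'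
  rw [r3] at hfin
  calc _ = (n : ℝ) ^ 2 * (n ^ 2 - 1) * ((2 - (1 - w)) ^ 2 * ((n ^ 2 - 1) * (1 - w) - 3) /
          (4 * ((n ^ 2 - 1) * (1 - w)) * D)) := by
        field_simp; ring
    _ ≤ _ := hfin
    _ = _ := by field_simp; ring

/-- the refined Schur-type bounds for `k = 1` and `k = 2`. -/
theorem schur_inequality_k_one_two (n : ℕ) (hn : 3 ≤ n) :
    (∀ p : Polynomial ℝ, p.natDegree ≤ n → (∀ x ∈ Icc (-1:ℝ) 1, |p.eval x| ≤ 1) →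
      (derivative^[2] p).eval 1 = 0 →
      |(derivative^[1] p).eval 1| ≤ (1 / 3) * chebDeriv n 1 1) ∧
    (∀ p : Polynomial ℝ, p.natDegree ≤ n → (∀ x ∈ Icc (-1:ℝ) 1, |p.eval x| ≤ 1) →
      (derivative^[3] p).eval 1 = 0 →
      |(derivative^[2] p).eval 1| ≤
        (3 / Real.pi ^ 2) * ((Real.pi ^ 2 - 6) / (15 - Real.pi ^ 2)) * chebDeriv n 2 1 ∧
      |(derivative^[2] p).eval 1| ≤ 0.23 * chebDeriv n 2 1) := by
  refine ⟨fun p hp hp1 hpk => part_one n hn p hp hp1 hpk, fun p hp hp1 hpk => ?_⟩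
  have h := part_two n hn p hp hp1 hpk
  refine ⟨h, h.trans (mul_le_mul_of_nonneg_right final_const ?_)⟩
  have hn0 : (3 : ℝ) ≤ n := by exact_mod_cast hn
  have : 0 ≤ (n : ℝ) ^ 2 - 1 := by nlinarith
  rw [chebDeriv_two]
  positivity
end
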